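/- Let p be a prime number and A a nontrivial commutative ring with an element d ∈ A, together with a ring homomorphism f : ℤ_p⟦T⟧ → A from the power series ring over the p-adic integers satisfying f(T) = d. Assume A is complete and separated for the (p,d)-adic topology (i.e. IsAdicComplete holds for the ideal generated by p and d). Then the pair (p, d) is a regular sequence on A if and only if A, regarded as a ℤ_p⟦T⟧-module via f, is flat. -/

import Mathlib

/-!
The ideals `I` for which `I ⊗ M → M` is injective form an Oka family, so over a Noetherian ring
flatness only has to be tested on prime ideals. If `R` is a discrete valuation ring with uniformizer
`ϖ`, every prime of `R⟦X⟧` is principal or equal to `(ϖ, X)`. For `(ϖ, X)` the injectivity follows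
from weak regularity of `ϖ, X` on `M`. For a principal ideal one needs every `g ≠ 0` to act
injectively on `M`: write `g = ϖ ^ k * g'` with `ϖ ∤ g'`, so that `g'` is congruent modulo `ϖ` to
`X ^ n` times a unit; then `g'` is regular on `M / ϖM`, hence on `M` because `M` is `ϖ`-adically
separated. Conversely, `ϖ, X` is weakly regular on `R⟦X⟧` and flatness transports this to `M`.
-/

section Flat

open Function TensorProduct

variable {R : Type*} [CommRing R] {M : Type*} [AddCommGroup M] [Module R M]

/-- The inclusion `I ⊆ I + (a)`. -/
abbrev toSup (I : Ideal R) (a : R) : I →ₗ[R] ↥(I ⊔ Ideal.span {a}) :=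
  Submodule.inclusion le_sup_left

/-- The element `a` of the ideal `I + (a)`. -/
abbrev supGen (I : Ideal R) (a : R) : ↥(I ⊔ Ideal.span {a}) :=
  ⟨a, Ideal.mem_sup_right (Ideal.mem_span_singleton_self a)⟩

/-- The presentation `(i, r) ↦ i + r * a` of the ideal `I + (a)`; its kernel is a copy of the colon
ideal `(I : a)`. -/
def prodToSup (I : Ideal R) (a : R) : I × R →ₗ[R] ↥(I ⊔ Ideal.span {a}) :=
  (toSup I a).coprod (LinearMap.toSpanSingleton R _ (supGen I a))

/-- The map `r ↦ (-(a * r), r)` identifying the colon ideal `(I : a)` with the kernel of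
`prodToSup I a`. -/
def colonToProd (I : Ideal R) (a : R) : I.colon (Ideal.span {a}) →ₗ[R] I × R :=
  (-(LinearMap.mulLeft R a).restrict fun _ hx ↦ by
    simpa [mul_comm] using Ideal.mem_colon_span_singleton.1 hx).prod
    (Submodule.subtype _)

lemma exact_colonToProd_prodToSup (I : Ideal R) (a : R) :
    Exact (colonToProd I a) (prodToSup I a) := by
  rintro ⟨i, r⟩
  constructor
  · intro h
    have hi : (i : R) + r * a = 0 := congrArg Subtype.val h
    have hr : r ∈ I.colon (Ideal.span {a}) := Ideal.mem_colon_span_singleton.2 <| by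
      rw [eq_neg_of_add_eq_zero_right hi]
      exact I.neg_mem i.2
    refine ⟨⟨r, hr⟩, Prod.ext (Subtype.ext ?_) rfl⟩
    change -(a * r) = i
    linear_combination -hi
  · rintro ⟨x, hx⟩
    rw [← hx]
    refine Subtype.ext ?_
    change -(a * x) + x * a = 0
    ring

lemma prodToSup_surjective (I : Ideal R) (a : R) : Surjective (prodToSup I a) := by
  rintro ⟨x, hx⟩
  obtain ⟨i, hi, y, hy, rfl⟩ := Submodule.mem_sup.1 hx
  obtain ⟨r, rfl⟩ := Ideal.mem_span_singleton'.1 hy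
  exact ⟨(⟨i, hi⟩, r), rfl⟩

lemma isOka_injective_rTensor_subtype (R M : Type*) [CommRing R] [AddCommGroup M] [Module R M] :
    Ideal.IsOka fun I : Ideal R ↦ Injective (I.subtype.rTensor M) where
  top := (Submodule.topEquiv.rTensor M).injective
  oka {I a} hsup hcolon := by
    rw [injective_iff_map_eq_zero] at hsup hcolon ⊢
    intro z hz
    have hsup_inl : (prodToSup I a).rTensor M ((LinearMap.inl R I R).rTensor M z) = 0 := by
      refine hsup _ ?_
      rw [← LinearMap.rTensor_comp_apply, ← LinearMap.rTensor_comp_apply, ← hz]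
      congr 2
      ext
      simp [prodToSup]
    obtain ⟨w, hw⟩ := (rTensor_exact M (exact_colonToProd_prodToSup I a)
      (prodToSup_surjective I a) _).1 hsup_inl
    have hw_zero : w = 0 := by
      refine hcolon w ?_
      have : (LinearMap.snd R I R).rTensor M ((colonToProd I a).rTensor M w) = 0 := by
        rw [hw, ← LinearMap.rTensor_comp_apply]
        simp
      rwa [← LinearMap.rTensor_comp_apply] at this
    have : (LinearMap.fst R I R).rTensor M ((LinearMap.inl R I R).rTensor M z) = z := by
      rw [← LinearMap.rTensor_comp_apply]
      simp
    rw [← this, ← hw, hw_zero, map_zero, map_zero]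

lemma flat_of_forall_isPrime_injective_rTensor_subtype [IsNoetherianRing R]
    (h : ∀ P : Ideal R, P.IsPrime → Injective (P.subtype.rTensor M)) : Module.Flat R M :=
  Module.Flat.iff_rTensor_injective'.2 <|
    (isOka_injective_rTensor_subtype R M).forall_of_forall_prime
      (fun I hI ↦ (exists_maximal_of_wellFoundedGT _ ⟨I, hI⟩)) h

lemma exists_eq_rTensor_add_tmul (I : Ideal R) (a : R) (z : ↥(I ⊔ Ideal.span {a}) ⊗[R] M) :
    ∃ (y : I ⊗[R] M) (m : M), z = (toSup I a).rTensor M y + supGen I a ⊗ₜ m := by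
  induction z with
  | zero => exact ⟨0, 0, by simp⟩
  | tmul x m =>
    obtain ⟨⟨i, r⟩, rfl⟩ := prodToSup_surjective I a x
    refine ⟨i ⊗ₜ m, r • m, ?_⟩
    rw [LinearMap.rTensor_tmul, ← TensorProduct.smul_tmul, ← TensorProduct.add_tmul]
    rfl
  | add _ _ h₁ h₂ =>
    obtain ⟨y₁, m₁, rfl⟩ := h₁
    obtain ⟨y₂, m₂, rfl⟩ := h₂
    refine ⟨y₁ + y₂, m₁ + m₂, ?_⟩
    rw [map_add, TensorProduct.tmul_add, add_add_add_comm]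

lemma supGen_tmul_mem_range (I : Ideal R) (a : R) {m : M}
    (hm : m ∈ (I • ⊤ : Submodule R M)) :
    supGen I a ⊗ₜ m ∈ LinearMap.range ((toSup I a).rTensor M) := by
  refine Submodule.smul_induction_on hm (fun i hi n _ ↦ ?_) fun x y hx hy ↦ ?_
  · refine ⟨⟨i, hi⟩ ⊗ₜ (a • n), ?_⟩
    rw [LinearMap.rTensor_tmul, ← TensorProduct.smul_tmul, ← TensorProduct.smul_tmul]
    congr 1
    exact Subtype.ext (mul_comm a i)
  · rw [TensorProduct.tmul_add]
    exact add_mem hx hy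

lemma lid_rTensor_subtype_mem (I : Ideal R) (y : I ⊗[R] M) :
    TensorProduct.lid R M (I.subtype.rTensor M y) ∈ (I • ⊤ : Submodule R M) := by
  induction y with
  | zero => simp
  | tmul i m => simpa using Submodule.smul_mem_smul i.2 Submodule.mem_top
  | add _ _ h₁ h₂ => rw [map_add, map_add]; exact add_mem h₁ h₂

lemma injective_rTensor_subtype_sup_span_singleton {I : Ideal R} {a : R}
    (hI : Injective (I.subtype.rTensor M))
    (ha : IsSMulRegular (M ⧸ (I • ⊤ : Submodule R M)) a) :
    Injective ((I ⊔ Ideal.span {a}).subtype.rTensor M) := by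
  rw [injective_iff_map_eq_zero]
  intro z hz
  have subtype_toSup (y : I ⊗[R] M) : (I ⊔ Ideal.span {a}).subtype.rTensor M
      ((toSup I a).rTensor M y) = I.subtype.rTensor M y :=
    (LinearMap.rTensor_comp_apply ..).symm
  suffices z ∈ LinearMap.range ((toSup I a).rTensor M) by
    obtain ⟨y, rfl⟩ := this
    rw [subtype_toSup] at hz
    rw [(injective_iff_map_eq_zero _).1 hI y hz, map_zero]
  obtain ⟨y, m, rfl⟩ := exists_eq_rTensor_add_tmul I a z
  have ham : a • m ∈ (I • ⊤ : Submodule R M) := by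
    have h : TensorProduct.lid R M (I.subtype.rTensor M y) + a • m = 0 := by
      simpa [subtype_toSup] using congrArg (TensorProduct.lid R M) hz
    rw [eq_neg_of_add_eq_zero_right h]
    exact neg_mem (lid_rTensor_subtype_mem I y)
  exact add_mem (LinearMap.mem_range_self _ y)
    (supGen_tmul_mem_range I a (mem_of_isSMulRegular_quotient_of_smul_mem ha ham))

lemma injective_rTensor_subtype_ofList {rs : List R}
    (h : RingTheory.Sequence.IsWeaklyRegular M rs) :
    Injective ((Ideal.ofList rs).subtype.rTensor M) := by
  induction rs using List.reverseRecOn with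
  | nil =>
    rw [Ideal.ofList_nil, injective_iff_map_eq_zero]
    exact fun z _ ↦ Subsingleton.elim z 0
  | append_singleton rs a ih =>
    rw [RingTheory.Sequence.isWeaklyRegular_append_iff,
      RingTheory.Sequence.isWeaklyRegular_singleton_iff] at h
    rw [Ideal.ofList_append, Ideal.ofList_singleton]
    exact injective_rTensor_subtype_sup_span_singleton (ih h.1) h.2

end Flat

section Regular

open RingTheory.Sequence
open scoped Pointwise

variable {R : Type*} [CommRing R] {M : Type*} [AddCommGroup M] [Module R M]

lemma isWeaklyRegular_pair_iff {a b : R} :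
    IsWeaklyRegular M [a, b] ↔ (∀ x : M, a • x = 0 → x = 0) ∧
      ∀ x : M, b • x ∈ a • (⊤ : Submodule R M) → x ∈ a • (⊤ : Submodule R M) := by
  rw [isWeaklyRegular_cons_iff, isWeaklyRegular_singleton_iff,
    isSMulRegular_iff_right_eq_zero_of_smul, isSMulRegular_quotient_iff_mem_of_smul_mem]

lemma isSMulRegular_of_quotSMulTop {a b : R} [IsHausdorff (Ideal.span {a}) M]
    (ha : IsSMulRegular M a) (hb : IsSMulRegular (QuotSMulTop a M) b) : IsSMulRegular M b := by
  rw [isSMulRegular_iff_right_eq_zero_of_smul]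
  intro x hx
  have exists_eq_pow_smul (n : ℕ) : ∃ y : M, x = a ^ n • y ∧ b • y = 0 := by
    induction n with
    | zero => exact ⟨x, by simp, hx⟩
    | succ n ih =>
      obtain ⟨y, rfl, hy⟩ := ih
      obtain ⟨z, -, rfl⟩ : y ∈ a • (⊤ : Submodule R M) :=
        mem_of_isSMulRegular_quotient_of_smul_mem hb (hy ▸ zero_mem _)
      refine ⟨z, by simp [pow_succ, mul_smul], ha.right_eq_zero_of_smul ?_⟩
      rw [smul_comm]
      exact hy
  refine IsHausdorff.haus ‹_› x fun n ↦ ?_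
  obtain ⟨y, hxy, -⟩ := exists_eq_pow_smul n
  rw [SModEq.zero, hxy, Ideal.span_singleton_pow]
  exact Submodule.smul_mem_smul (Ideal.mem_span_singleton_self _) Submodule.mem_top

lemma isSMulRegular_quotSMulTop_of_dvd_sub {a b c : R} (h : a ∣ b - c)
    (hc : IsSMulRegular (QuotSMulTop a M) c) : IsSMulRegular (QuotSMulTop a M) b := by
  obtain ⟨r, hr⟩ := h
  have smul_eq (x : QuotSMulTop a M) : b • x = c • x := by
    rw [← sub_eq_zero, ← sub_smul, hr, mul_smul]
    exact Module.mem_annihilator.1 (QuotSMulTop.mem_annihilator M a) (r • x)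
  intro x y hxy
  exact hc (by simpa only [smul_eq] using hxy)

lemma isWeaklyRegular_of_flat [Module.Flat R M] {rs : List R} (h : IsWeaklyRegular R rs) :
    IsWeaklyRegular M rs :=
  (TensorProduct.lid R M).isWeaklyRegular_congr rs |>.1 h.isWeaklyRegular_rTensor

end Regular

section PowerSeries

open PowerSeries RingTheory.Sequence

variable {R : Type*} [CommRing R]

lemma C_dvd_iff_forall_dvd_coeff {r : R} {g : R⟦X⟧} : C r ∣ g ↔ ∀ n, r ∣ coeff n g := by
  constructor
  · rintro ⟨h, rfl⟩ n
    exact ⟨coeff n h, coeff_C_mul n h r⟩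
  · intro h
    choose c hc using h
    exact ⟨mk c, by ext n; rw [coeff_C_mul, coeff_mk, hc]⟩

lemma isWeaklyRegular_C_X {r : R} (hr : IsSMulRegular R r) : IsWeaklyRegular R⟦X⟧ [C r, X] := by
  simp only [isWeaklyRegular_pair_iff, smul_eq_mul, Submodule.mem_smul_pointwise_iff_exists,
    Submodule.mem_top, true_and]
  constructor
  · intro g hg
    ext n
    refine hr.right_eq_zero_of_smul ?_
    rw [smul_eq_mul, ← coeff_C_mul, hg, map_zero]
  · rintro g ⟨h, hgh⟩
    obtain ⟨k, rfl⟩ : C r ∣ g := C_dvd_iff_forall_dvd_coeff.2 fun n ↦ by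
      rw [← coeff_succ_X_mul, ← hgh]
      exact C_dvd_iff_forall_dvd_coeff.1 (dvd_mul_right _ _) _
    exact ⟨k, rfl⟩

lemma exists_C_dvd_sub_X_pow_mul [IsLocalRing R] {ϖ : R}
    (hϖ : IsLocalRing.maximalIdeal R = Ideal.span {ϖ}) {g : R⟦X⟧} (hg : ¬ C ϖ ∣ g) :
    ∃ (n : ℕ) (u : R⟦X⟧), IsUnit u ∧ C ϖ ∣ g - X ^ n * u := by
  classical
  have hex : ∃ n, ¬ ϖ ∣ coeff n g := by simpa [C_dvd_iff_forall_dvd_coeff] using hg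
  refine ⟨Nat.find hex, mk fun i ↦ coeff (i + Nat.find hex) g, ?_,
    C_dvd_iff_forall_dvd_coeff.2 fun i ↦ ?_⟩
  · rw [isUnit_iff_constantCoeff, ← IsLocalRing.notMem_maximalIdeal, hϖ,
      Ideal.mem_span_singleton]
    simpa using Nat.find_spec hex
  · rw [sub_eq_of_eq_add' (g.eq_X_pow_mul_shift_add_trunc (Nat.find hex)), Polynomial.coeff_coe,
      coeff_trunc]
    split_ifs with hi
    · exact not_not.1 (Nat.find_min hex hi)
    · exact dvd_zero ϖ

lemma exists_eq_span_singleton_of_X_notMem [IsPrincipalIdealRing R] {P : Ideal R⟦X⟧} [P.IsPrime]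
    (hX : X ∉ P) : ∃ g, P = Ideal.span {g} := by
  obtain ⟨r, hr⟩ := IsPrincipalIdealRing.principal (P.map constantCoeff)
  obtain ⟨T, hT, -, hcard⟩ :=
    exist_eq_span_eq_ncard_of_X_notMem hX (S := {r}) hr.symm (Set.finite_singleton r)
  rw [Set.ncard_singleton, Set.ncard_eq_one] at hcard
  obtain ⟨g, rfl⟩ := hcard
  exact ⟨g, hT⟩

lemma isPrime_map_constantCoeff {P : Ideal R⟦X⟧} [P.IsPrime] (hX : X ∈ P) :
    (P.map constantCoeff).IsPrime :=
  Ideal.map_isPrime_of_surjective constantCoeff_surj fun _ hg ↦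
    P.mem_of_dvd (X_dvd_iff.2 hg) hX

section DVR

variable [IsDomain R] [IsDiscreteValuationRing R] {ϖ : R}

lemma eq_span_singleton_or_eq_span_pair (hϖ : Irreducible ϖ) (P : Ideal R⟦X⟧) [P.IsPrime] :
    (∃ g, P = Ideal.span {g}) ∨ P = Ideal.span {C ϖ, X} := by
  by_cases hX : X ∈ P
  · have : (P.map constantCoeff).IsPrime := isPrime_map_constantCoeff hX
    by_cases hP : P.map constantCoeff = ⊥
    · left
      have hP' := eq_span_insert_X_of_X_mem_of_span_eq hX (Ideal.span_empty.trans hP.symm)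
      exact ⟨X, by simpa using hP'⟩
    · right
      have hmax := IsLocalRing.eq_maximalIdeal (Ideal.IsPrime.isMaximal this hP)
      rw [hϖ.maximalIdeal_eq] at hmax
      rw [eq_span_insert_X_of_X_mem_of_span_eq hX hmax.symm, Set.image_singleton, Set.pair_comm]
  · exact .inl (exists_eq_span_singleton_of_X_notMem hX)

variable {M : Type*} [AddCommGroup M] [Module R⟦X⟧ M]

lemma isSMulRegular_of_isWeaklyRegular_C_X (hϖ : Irreducible ϖ)
    [IsHausdorff (Ideal.span {(C ϖ : R⟦X⟧)}) M] (h : IsWeaklyRegular M [C ϖ, (X : R⟦X⟧)])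
    {g : R⟦X⟧} (hg : g ≠ 0) : IsSMulRegular M g := by
  rw [isWeaklyRegular_cons_iff, isWeaklyRegular_singleton_iff] at h
  obtain ⟨hCϖ, hX⟩ := h
  have hnu : ¬ IsUnit (C ϖ) := by simpa [isUnit_iff_constantCoeff] using hϖ.not_isUnit
  obtain ⟨g', hgg', hg'⟩ :=
    (FiniteMultiplicity.of_not_isUnit hnu hg).exists_eq_pow_mul_and_not_dvd
  obtain ⟨n, u, hu, hdvd⟩ := exists_C_dvd_sub_X_pow_mul hϖ.maximalIdeal_eq hg'
  rw [hgg']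
  exact (hCϖ.pow _).mul <| isSMulRegular_of_quotSMulTop hCϖ <|
    isSMulRegular_quotSMulTop_of_dvd_sub hdvd <| (hX.pow n).mul (hu.isSMulRegular _)

theorem flat_iff_isWeaklyRegular_C_X (hϖ : Irreducible ϖ)
    [IsHausdorff (Ideal.span {(C ϖ : R⟦X⟧)}) M] :
    Module.Flat R⟦X⟧ M ↔ IsWeaklyRegular M [C ϖ, (X : R⟦X⟧)] := by
  refine ⟨fun _ ↦ isWeaklyRegular_of_flat (isWeaklyRegular_C_X
    (IsRegular.of_ne_zero hϖ.ne_zero).left.isSMulRegular), fun h ↦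
    flat_of_forall_isPrime_injective_rTensor_subtype fun P _ ↦ ?_⟩
  rcases eq_span_singleton_or_eq_span_pair hϖ P with ⟨g, rfl⟩ | rfl
  · rcases eq_or_ne g 0 with rfl | hg
    · rw [Ideal.span_singleton_zero, ← Ideal.ofList_nil]
      exact injective_rTensor_subtype_ofList (IsWeaklyRegular.nil R⟦X⟧ M)
    · rw [← Ideal.ofList_singleton]
      exact injective_rTensor_subtype_ofList ((isWeaklyRegular_singleton_iff M g).2
        (isSMulRegular_of_isWeaklyRegular_C_X hϖ h hg))
  · rw [Ideal.span_insert, ← Ideal.ofList_singleton X, ← Ideal.ofList_cons]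
    exact injective_rTensor_subtype_ofList h

end DVR

end PowerSeries

open PowerSeries Pointwise in
theorem stmt_0_general {R : Type*} [CommRing R] [IsDomain R] [IsDiscreteValuationRing R] {ϖ : R}
    (hϖ : Irreducible ϖ) {A : Type*} [CommRing A] [Nontrivial A] [Algebra R⟦X⟧ A] {a d : A}
    (ha : algebraMap R⟦X⟧ A (C ϖ) = a) (hd : algebraMap R⟦X⟧ A X = d)
    (hsep : IsHausdorff (Ideal.span {a, d}) A) :
    ((∀ x : A, a * x = 0 → x = 0) ∧
        (∀ x : A, d * x ∈ Ideal.span {a} → x ∈ Ideal.span {a}) ∧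
        Ideal.span {a, d} ≠ ⊤) ↔
      Module.Flat R⟦X⟧ A := by
  have htop : Ideal.span {a, d} ≠ ⊤ := fun h ↦
    not_subsingleton A (IsHausdorff.subsingleton (h ▸ hsep))
  have : IsHausdorff (Ideal.span {(C ϖ : R⟦X⟧)}) A :=
    IsHausdorff.of_map (J := Ideal.span {a, d}) <| by
      rw [Ideal.map_span, Set.image_singleton, ha]
      exact Ideal.span_mono (by simp)
  have mem_smul_top (x : A) : x ∈ (C ϖ : R⟦X⟧) • (⊤ : Submodule R⟦X⟧ A) ↔ x ∈ Ideal.span {a} := by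
    simp [Submodule.mem_smul_pointwise_iff_exists, Ideal.mem_span_singleton', Algebra.smul_def, ha,
      mul_comm]
  simp only [flat_iff_isWeaklyRegular_C_X hϖ, isWeaklyRegular_pair_iff, mem_smul_top,
    Algebra.smul_def, ha, hd, htop, ne_eq, not_false_eq_true, and_true]

/-- **Lemma 2.1 ((2) ⇔ (3))**: for a nontrivial commutative ring `A` with an element `d`,
complete and separated for the `(p, d)`-adic topology and equipped with a ring map
`f : ℤ_p⟦T⟧ → A` sending `T` to `d`, the pair `(p, d)` is a regular sequence on `A`
(i.e. `p` is a nonzerodivisor on `A`, `d` is a nonzerodivisor on `A/pA`, and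
`A/(p,d)A ≠ 0`) if and only if `A` is flat as a `ℤ_p⟦T⟧`-module via `f`. -/
theorem stmt_0 (p : ℕ) [Fact p.Prime] (A : Type) [CommRing A] [Nontrivial A] (d : A)
    (f : PowerSeries (PadicInt p) →+* A) (hf : f PowerSeries.X = d)
    (hcomplete : IsAdicComplete (Ideal.span {(p : A), d}) A) :
    ((∀ x : A, (p : A) * x = 0 → x = 0) ∧
        (∀ x : A, d * x ∈ Ideal.span {(p : A)} → x ∈ Ideal.span {(p : A)}) ∧
        Ideal.span {(p : A), d} ≠ ⊤) ↔
      letI : Module (PowerSeries (PadicInt p)) A := Module.compHom A f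
      Module.Flat (PowerSeries (PadicInt p)) A := by
  let := f.toAlgebra
  exact stmt_0_general PadicInt.irreducible_p (by simp) hf hcomplete.toIsHausdorff
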